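/- Dual norm formula: let φ be a divergence function satisfying the Δ₂-condition, ψ its convex conjugate, β > 0, and Z ∈ L^φ. Then the dual norm ‖Z‖*_{φ,β} := sup{E[X·Z] : X ∈ L^ψ, ‖X‖_{φ,β} ≤ 1} satisfies ‖Z‖*_{φ,β} = inf{λ ≥ E|Z| : E[φ(max{c_Z(λ), |Z|/λ})] ≤ β}, where c_Z : [E|Z|, ∞) → [0,1] is the (unique) continuous function with E[max{c_Z(λ), |Z|/λ}] = 1 for all λ ≥ E|Z|. Equivalently, ‖Z‖*_{φ,β} = inf{λ ≥ E|Z| : ∃ c ∈ [0,1] with E[max{c, |Z|/λ}] = 1 and E[φ(max{c, |Z|/λ})] ≤ β}. -/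

import Mathlib

open MeasureTheory
open scoped ENNReal

noncomputable section

/-- A divergence function: convex, lower semicontinuous `φ : ℝ → ℝ ∪ {∞}` with `φ 1 = 0`,
effective domain `[0, ∞)` and superlinear growth `φ x / x → ∞` as `x → ∞`. -/
structure IsDivergenceFunction (φ : ℝ → EReal) : Prop where
  convex : ∀ x y a b : ℝ, 0 < a → 0 < b → a + b = 1 →
    φ (a * x + b * y) ≤ (a : EReal) * φ x + (b : EReal) * φ y
  lsc : LowerSemicontinuous φ
  ne_bot : ∀ x : ℝ, φ x ≠ ⊥
  one : φ 1 = 0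
  domain : ∀ x : ℝ, φ x ≠ ⊤ ↔ 0 ≤ x
  superlinear : ∀ M : ℝ, ∃ N : ℝ, ∀ x : ℝ, N ≤ x → ((M * x : ℝ) : EReal) ≤ φ x

/-- The convex conjugate `ψ(y) = sup_z (y·z − φ(z))`, as an extended real number. -/
def psiE (φ : ℝ → EReal) (y : ℝ) : EReal := ⨆ z : ℝ, (((y * z : ℝ) : EReal) - φ z)

/-- The convex conjugate, as a real number (it is finite for divergence functions). -/
def psiR (φ : ℝ → EReal) (y : ℝ) : ℝ := (psiE φ y).toReal

open Classical in
/-- The objective `t (β + μ + E ψ(X/t − μ))` of the φ-divergence risk measure;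
the value is `⊤` when `ψ(X/t − μ)` fails to be integrable. -/
def rhoObj {Ω : Type*} [MeasurableSpace Ω] (φ : ℝ → EReal) (β : ℝ) (P : Measure Ω)
    (X : Ω → ℝ) (μ t : ℝ) : EReal :=
  if Integrable (fun ω => psiR φ (X ω / t - μ)) P then
    (((t * (β + μ + ∫ ω, psiR φ (X ω / t - μ) ∂P)) : ℝ) : EReal)
  else ⊤

/-- The φ-divergence risk measure `ρ_{φ,β}(X) = inf_{μ ∈ ℝ, t > 0} t (β + μ + E ψ(X/t − μ))`. -/
def rhoDiv {Ω : Type*} [MeasurableSpace Ω] (φ : ℝ → EReal) (β : ℝ) (P : Measure Ω)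
    (X : Ω → ℝ) : EReal :=
  ⨅ (μ : ℝ) (t : ℝ) (_ : 0 < t), rhoObj φ β P X μ t

/-- The Δ₂-condition: `φ(2x) ≤ k·φ(x)` for all `x > T`, for some `T, k ≥ 0`. -/
def DeltaTwo (φ : ℝ → EReal) : Prop :=
  ∃ T k : ℝ, 0 ≤ T ∧ 0 ≤ k ∧ ∀ x : ℝ, T < x → φ (2 * x) ≤ (k : EReal) * φ x
/-- The set of values `E[X·Z]` over the unit ball of the φ-divergence norm in `L^ψ`;
its supremum is the dual norm `‖Z‖*_{φ,β}`. -/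
def dualNormSet {Ω : Type*} [MeasurableSpace Ω] (φ : ℝ → EReal) (β : ℝ) (P : Measure Ω)
    (Z : Ω → ℝ) : Set EReal :=
  {v | ∃ X : Ω → ℝ, (∃ t : ℝ, 0 < t ∧ Integrable (fun ω => psiR φ (t * |X ω|)) P) ∧
    rhoDiv φ β P (fun ω => |X ω|) ≤ (1 : EReal) ∧
    Integrable (fun ω => X ω * Z ω) P ∧ v = ((∫ ω, X ω * Z ω ∂P : ℝ) : EReal)}
variable {Ω : Type*} [MeasurableSpace Ω]

/-!
Weak duality. By Fenchel–Young, `E[|X| W] ≤ ρ(|X|)` for every density `W` with `E[φ(W)] ≤ β`.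
If such a `W` satisfies `|Z| ≤ λ W`, then `E[X Z] ≤ λ ‖X‖`; take `W = max{c, |Z|/λ}`.

Strong duality. Suppose `λ > E|Z|` and the density `W = max{c, |Z|/λ}` violates `E[φ(W)] ≤ β`.
By Fatou's lemma a truncation `min{W, N}` already violates it. Let `g` be the right derivative of
`φ`. The variable `U = g(min{W, N}) - g(c)` vanishes where `|Z| < λ c`, so that
`E[U |Z|] = λ E[U W]`, and the equality case of Fenchel–Young shows that `μ = -g(c)`, `t = 1` give
`ρ(U) ≤ E[U W]`. Hence `U`, normalised and with the sign of `Z`, shows `‖Z‖* ≥ λ`. The truncation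
keeps `U` bounded, so that all the integrals are finite.
-/

section Preliminaries

open Filter Set Topology

lemma convexOn_add_rightDeriv_mul_le {s : Set ℝ} {f : ℝ → ℝ} (hf : ConvexOn ℝ s f) {x y : ℝ}
    (hx : x ∈ interior s) (hy : y ∈ s) :
    f x + derivWithin f (Ioi x) x * (y - x) ≤ f y := by
  rcases lt_trichotomy x y with hxy | rfl | hyx
  · have h := hf.rightDeriv_le_slope_of_mem_interior hx hy hxy
    rw [slope_def_field, le_div_iff₀ (sub_pos.2 hxy)] at h
    linarith
  · simp
  · have h := (hf.slope_le_leftDeriv_of_mem_interior hy hx hyx).trans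
      (hf.leftDeriv_le_rightDeriv_of_mem_interior hx)
    rw [slope_def_field, div_le_iff₀ (sub_pos.2 hyx)] at h
    linarith

lemma integrable_comp_of_monotoneOn_Icc {P : Measure Ω} [IsFiniteMeasure P] {f : ℝ → ℝ} {a b : ℝ}
    (hf : MonotoneOn f (Icc a b)) {V : Ω → ℝ} (hV : AEMeasurable V P) (hVab : ∀ ω, V ω ∈ Icc a b) :
    Integrable (fun ω => f (V ω)) P := by
  have hfab : ∀ x ∈ Icc a b, f x ∈ Icc (f a) (f b) := fun x hx =>
    have hab : a ≤ b := hx.1.trans hx.2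
    ⟨hf (left_mem_Icc.2 hab) hx hx.1, hf hx (right_mem_Icc.2 hab) hx.2⟩
  obtain ⟨g, hg, hfg⟩ := hf.exists_monotone_extension
    ⟨f a, forall_mem_image.2 fun x hx => (hfab x hx).1⟩
    ⟨f b, forall_mem_image.2 fun x hx => (hfab x hx).2⟩
  have hfV : AEMeasurable (fun ω => f (V ω)) P := by
    simp only [fun ω => hfg (hVab ω)]
    exact hg.measurable.comp_aemeasurable hV
  exact .of_mem_Icc (f a) (f b) hfV (.of_forall fun ω => hfab _ (hVab ω))

lemma integrable_and_integral_le_of_tendsto {P : Measure Ω} {f : ℕ → Ω → ℝ} {F : Ω → ℝ} {b : ℝ}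
    (hf : ∀ n, Integrable (f n) P) (hf0 : ∀ n ω, 0 ≤ f n ω)
    (hlim : ∀ ω, Tendsto (fun n => f n ω) atTop (𝓝 (F ω)))
    (hb : ∃ᶠ n in atTop, ∫ ω, f n ω ∂P ≤ b) :
    Integrable F P ∧ ∫ ω, F ω ∂P ≤ b := by
  have hF0 : ∀ ω, 0 ≤ F ω := fun ω => ge_of_tendsto' (hlim ω) fun n => hf0 n ω
  have hb0 : 0 ≤ b := by
    obtain ⟨n, hn⟩ := hb.exists
    exact (integral_nonneg (hf0 n)).trans hn
  have hFm : AEStronglyMeasurable F P :=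
    aestronglyMeasurable_of_tendsto_ae atTop (fun n => (hf n).1) (.of_forall hlim)
  have fatou : ∫⁻ ω, ENNReal.ofReal (F ω) ∂P ≤ ENNReal.ofReal b := calc
    _ = ∫⁻ ω, liminf (fun n => ENNReal.ofReal (f n ω)) atTop ∂P := lintegral_congr fun ω =>
        ((ENNReal.continuous_ofReal.tendsto _).comp (hlim ω)).liminf_eq.symm
    _ ≤ liminf (fun n => ∫⁻ ω, ENNReal.ofReal (f n ω) ∂P) atTop :=
        lintegral_liminf_le' fun n => (hf n).1.aemeasurable.ennreal_ofReal
    _ ≤ ENNReal.ofReal b := liminf_le_of_frequently_le' <| hb.mono fun n hn => by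
        rw [← ofReal_integral_eq_lintegral_ofReal (hf n) (.of_forall (hf0 n))]
        exact ENNReal.ofReal_le_ofReal hn
  refine ⟨⟨hFm, ?_⟩, ?_⟩
  · rw [hasFiniteIntegral_iff_ofReal (.of_forall hF0)]
    exact fatou.trans_lt ENNReal.ofReal_lt_top
  · rw [integral_eq_lintegral_of_nonneg_ae (.of_forall hF0) hFm]
    exact ENNReal.toReal_le_of_le_ofReal hb0 fatou

lemma max_ae_eq_max_of_integral_eq {P : Measure Ω} [IsFiniteMeasure P] {Y : Ω → ℝ}
    (hY : Integrable Y P) {a b : ℝ} (h : ∫ ω, max a (Y ω) ∂P = ∫ ω, max b (Y ω) ∂P) :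
    (fun ω => max a (Y ω)) =ᵐ[P] fun ω => max b (Y ω) := by
  wlog hab : a ≤ b generalizing a b
  · exact (this h.symm (le_of_not_ge hab)).symm
  · exact (integral_eq_iff_of_ae_le ((integrable_const a).sup hY) ((integrable_const b).sup hY)
      (.of_forall fun ω => max_le_max_right _ hab)).1 h

end Preliminaries

/-- The right derivative of the real-valued restriction of `φ`, a selection of subgradients of `φ`
on `(0, ∞)`. It is only meaningful there: `φ 0` is finite but the slope at `0` may be `-∞`. -/
def rightDerivative (φ : ℝ → EReal) (x : ℝ) : ℝ :=
  derivWithin (fun z => (φ z).toReal) (Set.Ioi x) x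

namespace IsDivergenceFunction

open Filter Set Topology

variable {φ : ℝ → EReal}

lemma coe_toReal (hφ : IsDivergenceFunction φ) {x : ℝ} (hx : 0 ≤ x) :
    ((φ x).toReal : EReal) = φ x :=
  EReal.coe_toReal ((hφ.domain x).2 hx) (hφ.ne_bot x)

lemma convexOn_toReal (hφ : IsDivergenceFunction φ) :
    ConvexOn ℝ (Ici 0) (fun x => (φ x).toReal) := by
  refine convexOn_iff_forall_pos.2 ⟨convex_Ici 0, fun x hx y hy a b ha hb hab => ?_⟩
  have hx : 0 ≤ x := hx
  have hy : 0 ≤ y := hy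
  have h := hφ.convex x y a b ha hb hab
  rw [← hφ.coe_toReal hx, ← hφ.coe_toReal hy,
    ← hφ.coe_toReal (x := a * x + b * y) (by positivity)] at h
  exact_mod_cast h

lemma toReal_one (hφ : IsDivergenceFunction φ) : (φ 1).toReal = 0 := by
  rw [hφ.one, EReal.toReal_zero]

lemma measurable_toReal (hφ : IsDivergenceFunction φ) : Measurable fun x => (φ x).toReal :=
  hφ.lsc.measurable.ereal_toReal

lemma eventually_mul_le_toReal (hφ : IsDivergenceFunction φ) (M : ℝ) :
    ∀ᶠ x in atTop, M * x ≤ (φ x).toReal := by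
  obtain ⟨N, hN⟩ := hφ.superlinear M
  filter_upwards [eventually_ge_atTop N, eventually_ge_atTop 0] with x hNx hx
  have h := hN x hNx
  rw [← hφ.coe_toReal hx] at h
  exact_mod_cast h

lemma add_rightDerivative_mul_le (hφ : IsDivergenceFunction φ) {x y : ℝ} (hx : 0 < x)
    (hy : 0 ≤ y) : (φ x).toReal + rightDerivative φ x * (y - x) ≤ (φ y).toReal :=
  convexOn_add_rightDeriv_mul_le hφ.convexOn_toReal (by simpa using hx) hy

lemma monotoneOn_rightDerivative (hφ : IsDivergenceFunction φ) :
    MonotoneOn (rightDerivative φ) (Ioi 0) := by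
  have h := hφ.convexOn_toReal.monotoneOn_rightDeriv
  rwa [interior_Ici] at h

lemma eventually_rightDerivative_nonneg (hφ : IsDivergenceFunction φ) :
    ∀ᶠ x in atTop, 0 ≤ rightDerivative φ x := by
  filter_upwards [hφ.eventually_mul_le_toReal 1, eventually_ge_atTop (φ 0).toReal,
    eventually_gt_atTop 0] with x hφx hx0 hx
  have h := hφ.add_rightDerivative_mul_le hx le_rfl
  exact nonneg_of_mul_nonneg_left (by linarith) hx

lemma exists_forall_mul_sub_le (hφ : IsDivergenceFunction φ) (y : ℝ) :
    ∃ B : ℝ, ∀ z, 0 ≤ z → y * z - (φ z).toReal ≤ B := by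
  obtain ⟨N, hN⟩ := eventually_atTop.1 (hφ.eventually_mul_le_toReal y)
  set a := rightDerivative φ 1
  refine ⟨|y - a| * |N| + |a|, fun z hz => ?_⟩
  rcases le_total N z with hNz | hzN
  · have hB : 0 ≤ |y - a| * |N| + |a| := by positivity
    linarith [hN z hNz]
  · have htangent := hφ.add_rightDerivative_mul_le one_pos hz
    rw [hφ.toReal_one] at htangent
    have hbound : (y - a) * z ≤ |y - a| * |N| :=
      mul_le_mul (le_abs_self _) (hzN.trans (le_abs_self _)) hz (abs_nonneg _)
    linarith [le_abs_self a]

lemma psiE_le (hφ : IsDivergenceFunction φ) {y B : ℝ}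
    (h : ∀ z, 0 ≤ z → y * z - (φ z).toReal ≤ B) : psiE φ y ≤ B := by
  refine iSup_le fun z => ?_
  by_cases hz : 0 ≤ z
  · rw [← hφ.coe_toReal hz]
    exact_mod_cast h z hz
  · rw [not_not.1 (mt (hφ.domain z).1 hz), EReal.sub_top]
    exact bot_le

lemma mul_sub_le_psiE (hφ : IsDivergenceFunction φ) (y : ℝ) {z : ℝ} (hz : 0 ≤ z) :
    ((y * z - (φ z).toReal : ℝ) : EReal) ≤ psiE φ y := by
  rw [EReal.coe_sub, hφ.coe_toReal hz]
  exact le_iSup (fun z : ℝ => ((y * z : ℝ) : EReal) - φ z) z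

lemma coe_psiR (hφ : IsDivergenceFunction φ) (y : ℝ) : (psiR φ y : EReal) = psiE φ y := by
  obtain ⟨B, hB⟩ := hφ.exists_forall_mul_sub_le y
  exact EReal.coe_toReal ((hφ.psiE_le hB).trans_lt (EReal.coe_lt_top B)).ne
    ((EReal.bot_lt_coe _).trans_le (hφ.mul_sub_le_psiE y zero_le_one)).ne'

lemma psiR_le (hφ : IsDivergenceFunction φ) {y B : ℝ}
    (h : ∀ z, 0 ≤ z → y * z - (φ z).toReal ≤ B) : psiR φ y ≤ B := by
  have hB := hφ.psiE_le h
  rw [← hφ.coe_psiR] at hB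
  exact_mod_cast hB

lemma mul_sub_le_psiR (hφ : IsDivergenceFunction φ) (y : ℝ) {z : ℝ} (hz : 0 ≤ z) :
    y * z - (φ z).toReal ≤ psiR φ y := by
  have h := hφ.mul_sub_le_psiE y hz
  rw [← hφ.coe_psiR] at h
  exact_mod_cast h

lemma monotone_psiR (hφ : IsDivergenceFunction φ) : Monotone (psiR φ) := fun a b hab =>
  hφ.psiR_le fun z hz => by
    linarith [hφ.mul_sub_le_psiR b hz, mul_le_mul_of_nonneg_right hab hz]

lemma le_psiR (hφ : IsDivergenceFunction φ) (y : ℝ) : y ≤ psiR φ y := by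
  have h := hφ.mul_sub_le_psiR y zero_le_one
  rwa [hφ.toReal_one, mul_one, sub_zero] at h

lemma neg_psiR_zero_le (hφ : IsDivergenceFunction φ) {x : ℝ} (hx : 0 ≤ x) :
    -psiR φ 0 ≤ (φ x).toReal := by
  linarith [hφ.mul_sub_le_psiR 0 hx]

lemma psiR_rightDerivative_le (hφ : IsDivergenceFunction φ) {x : ℝ} (hx : 0 < x) :
    psiR φ (rightDerivative φ x) ≤ rightDerivative φ x * x - (φ x).toReal :=
  hφ.psiR_le fun z hz => by linarith [hφ.add_rightDerivative_mul_le hx hz]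

lemma psiR_rightDerivative_min_le (hφ : IsDivergenceFunction φ) {x N : ℝ} (hx : 0 < x)
    (hN : 0 < N) (hderiv : 0 ≤ rightDerivative φ N) :
    psiR φ (rightDerivative φ (min x N)) ≤
      rightDerivative φ (min x N) * x - (φ (min x N)).toReal := by
  refine (hφ.psiR_rightDerivative_le (lt_min hx hN)).trans (sub_le_sub_right ?_ _)
  rcases le_total x N with hxN | hNx
  · rw [min_eq_left hxN]
  · rw [min_eq_right hNx]
    gcongr

lemma mul_le_mul_psiR_add (hφ : IsDivergenceFunction φ) {x w t : ℝ} (hw : 0 ≤ w) (ht : 0 < t)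
    (μ : ℝ) : x * w ≤ t * (psiR φ (x / t - μ) + (φ w).toReal + μ * w) := calc
  x * w = t * ((x / t - μ) * w + μ * w) := by field_simp; ring
  _ ≤ t * (psiR φ (x / t - μ) + (φ w).toReal + μ * w) := by
    have h := hφ.mul_sub_le_psiR (x / t - μ) hw
    gcongr
    linarith

lemma toReal_le_of_le_one (hφ : IsDivergenceFunction φ) {w : ℝ} (hw0 : 0 ≤ w) (hw1 : w ≤ 1) :
    (φ w).toReal ≤ (1 - w) * |(φ 0).toReal| := by
  have h := hφ.convexOn_toReal.2 (x := 0) (by simp) (y := 1) (by simp) (sub_nonneg.2 hw1) hw0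
    (sub_add_cancel 1 w)
  simp only [smul_eq_mul, mul_zero, mul_one, zero_add, hφ.toReal_one, add_zero] at h
  exact h.trans (mul_le_mul_of_nonneg_left (le_abs_self _) (sub_nonneg.2 hw1))

lemma toReal_le_of_one_lt (hφ : IsDivergenceFunction φ) {w K : ℝ} (hw : 1 < w) (hK : 1 ≤ K) :
    (φ w).toReal ≤ |(φ (K * w)).toReal| / K := by
  have hwKw : w ≤ K * w := le_mul_of_one_le_left (by linarith) hK
  have hKw : 0 < K * w - 1 := by linarith
  set θ := (w - 1) / (K * w - 1)
  have hθ0 : 0 ≤ θ := div_nonneg (by linarith) hKw.le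
  have hθK : θ ≤ 1 / K := (div_le_div_iff₀ hKw (by linarith)).2 (by linarith)
  have hθ1 : θ ≤ 1 := (div_le_one hKw).2 (by linarith)
  have hcomb : (1 - θ) * 1 + θ * (K * w) = w := by
    have hθw : θ * (K * w - 1) = w - 1 := div_mul_cancel₀ _ hKw.ne'
    linarith
  have h := hφ.convexOn_toReal.2 (x := 1) (by simp) (y := K * w)
    (Set.mem_Ici.2 (by linarith)) (sub_nonneg.2 hθ1) hθ0 (sub_add_cancel 1 θ)
  simp only [smul_eq_mul, hcomb, hφ.toReal_one, mul_zero, zero_add] at h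
  calc (φ w).toReal ≤ θ * (φ (K * w)).toReal := h
    _ ≤ θ * |(φ (K * w)).toReal| := mul_le_mul_of_nonneg_left (le_abs_self _) hθ0
    _ ≤ 1 / K * |(φ (K * w)).toReal| := mul_le_mul_of_nonneg_right hθK (abs_nonneg _)
    _ = |(φ (K * w)).toReal| / K := by ring

lemma toReal_max_div_le (hφ : IsDivergenceFunction φ) {v c K : ℝ} (hc : c ∈ Icc (0 : ℝ) 1)
    (hK : 1 ≤ K) :
    (φ (max c (v / K))).toReal ≤ |(φ v).toReal| / K + (1 - c) * |(φ 0).toReal| := by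
  have hv : 0 ≤ |(φ v).toReal| / K := by positivity
  have h0 : 0 ≤ (1 - c) * |(φ 0).toReal| := mul_nonneg (sub_nonneg.2 hc.2) (abs_nonneg _)
  rcases le_or_gt (max c (v / K)) 1 with hle | hgt
  · have h := hφ.toReal_le_of_le_one (hc.1.trans (le_max_left _ _)) hle
    have hmax : (1 - max c (v / K)) * |(φ 0).toReal| ≤ (1 - c) * |(φ 0).toReal| := by
      gcongr
      exact le_max_left _ _
    linarith
  · have hvK : 1 < v / K := (lt_max_iff.1 hgt).resolve_left hc.2.not_gt
    rw [max_eq_right (hc.2.trans hvK.le)]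
    have h := hφ.toReal_le_of_one_lt hvK hK
    rw [mul_div_cancel₀ v (by linarith)] at h
    linarith

end IsDivergenceFunction

/-- `W` has `φ`-divergence at most `β`, i.e. `E[φ(W)] ≤ β`. Integrability is part of the condition,
since the Bochner integral of a non-integrable function is `0`. -/
def HasDivergenceLE (φ : ℝ → EReal) (β : ℝ) (P : Measure Ω) (W : Ω → ℝ) : Prop :=
  Integrable (fun ω => (φ (W ω)).toReal) P ∧ ∫ ω, (φ (W ω)).toReal ∂P ≤ β

section DivergenceBounds

open Filter Set Topology

variable {P : Measure Ω} {φ : ℝ → EReal} {β : ℝ} {W : Ω → ℝ}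

lemma HasDivergenceLE.congr {W' : Ω → ℝ} (h : HasDivergenceLE φ β P W) (hWW' : W =ᵐ[P] W') :
    HasDivergenceLE φ β P W' := by
  have hφW : (fun ω => (φ (W ω)).toReal) =ᵐ[P] fun ω => (φ (W' ω)).toReal :=
    hWW'.fun_comp fun x => (φ x).toReal
  exact ⟨h.1.congr hφW, (integral_congr_ae hφW).symm.trans_le h.2⟩

lemma integrable_toReal_min [IsFiniteMeasure P] (hφ : IsDivergenceFunction φ)
    (hW : AEMeasurable W P) (hW0 : ∀ ω, 0 ≤ W ω) {N : ℝ} (hN : 0 ≤ N) :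
    Integrable (fun ω => (φ (min (W ω) N)).toReal) P := by
  refine .of_mem_Icc (-psiR φ 0) (max (φ 0).toReal (φ N).toReal)
    (hφ.measurable_toReal.comp_aemeasurable (hW.min aemeasurable_const)) (.of_forall fun ω => ?_)
  have hmem : min (W ω) N ∈ Icc 0 N := ⟨le_min (hW0 ω) hN, min_le_right _ _⟩
  exact ⟨hφ.neg_psiR_zero_le hmem.1,
    hφ.convexOn_toReal.le_max_of_mem_Icc (mem_Ici.2 le_rfl) (mem_Ici.2 hN) hmem⟩

lemma hasDivergenceLE_of_frequently_min [IsProbabilityMeasure P] (hφ : IsDivergenceFunction φ)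
    (hW : AEMeasurable W P) (hW0 : ∀ ω, 0 ≤ W ω)
    (h : ∃ᶠ n : ℕ in atTop, ∫ ω, (φ (min (W ω) n)).toReal ∂P ≤ β) :
    HasDivergenceLE φ β P W := by
  have hint (n : ℕ) := integrable_toReal_min hφ hW hW0 n.cast_nonneg
  have hlim (ω : Ω) : Tendsto (fun n : ℕ => (φ (min (W ω) n)).toReal + psiR φ 0) atTop
      (𝓝 ((φ (W ω)).toReal + psiR φ 0)) := by
    refine tendsto_const_nhds.congr' ?_
    filter_upwards [tendsto_natCast_atTop_atTop.eventually_ge_atTop (W ω)] with n hn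
    rw [min_eq_left hn]
  have hshift (n : ℕ) : ∫ ω, ((φ (min (W ω) n)).toReal + psiR φ 0) ∂P =
      ∫ ω, (φ (min (W ω) n)).toReal ∂P + psiR φ 0 := by
    simp [integral_add (hint n) (integrable_const _)]
  obtain ⟨hi, hle⟩ := integrable_and_integral_le_of_tendsto (b := β + psiR φ 0)
    (fun n => (hint n).add (integrable_const (psiR φ 0)))
    (fun n ω => by
      have h := hφ.neg_psiR_zero_le (le_min (hW0 ω) n.cast_nonneg)
      simp only [Pi.add_apply]
      linarith)
    hlim (h.mono fun n hn => (hshift n).trans_le (add_le_add_left hn _))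
  have hφW : Integrable (fun ω => (φ (W ω)).toReal) P :=
     (hi.sub (integrable_const (psiR φ 0))).congr (.of_forall fun ω => add_sub_cancel_right _ _)
  refine ⟨hφW, ?_⟩
  rw [integral_add hφW (integrable_const _)] at hle
  simpa using hle

lemma hasDivergenceLE_of_toReal_le [IsFiniteMeasure P] (hφ : IsDivergenceFunction φ)
    (hW : AEMeasurable W P) (hW0 : ∀ ω, 0 ≤ W ω) {g : Ω → ℝ} (hg : Integrable g P)
    (hWg : ∀ ω, (φ (W ω)).toReal ≤ g ω) (hgβ : ∫ ω, g ω ∂P ≤ β) : HasDivergenceLE φ β P W := by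
  have hφW : Integrable (fun ω => (φ (W ω)).toReal) P :=
    integrable_of_le_of_le (g₁ := fun _ => -psiR φ 0)
      (hφ.measurable_toReal.comp_aemeasurable hW).aestronglyMeasurable
      (.of_forall fun ω => hφ.neg_psiR_zero_le (hW0 ω)) (.of_forall hWg) (integrable_const _) hg
  exact ⟨hφW, (integral_mono hφW hg hWg).trans hgβ⟩

lemma one_sub_le_integral_of_integral_max_eq_one [IsProbabilityMeasure P] {Y : Ω → ℝ} {c : ℝ}
    (hY : Integrable Y P) (hY0 : ∀ ω, 0 ≤ Y ω) (hc : 0 ≤ c) (hmax : ∫ ω, max c (Y ω) ∂P = 1) :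
    1 - c ≤ ∫ ω, Y ω ∂P := by
  have h : ∫ ω, max c (Y ω) ∂P ≤ ∫ ω, (c + Y ω) ∂P :=
    integral_mono ((integrable_const c).sup hY) ((integrable_const c).add hY) fun ω =>
      max_le_add_of_nonneg hc (hY0 ω)
  rw [hmax, integral_add (integrable_const c) hY, integral_const, probReal_univ, one_smul] at h
  linarith

lemma exists_forall_hasDivergenceLE [IsProbabilityMeasure P] (hφ : IsDivergenceFunction φ)
    (hβ : 0 < β) {Z : Ω → ℝ} (hZ : Integrable Z P)
    (hZφ : ∃ t : ℝ, 0 < t ∧ Integrable (fun ω => (φ (t * |Z ω|)).toReal) P) :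
    ∃ lam : ℝ, ∫ ω, |Z ω| ∂P ≤ lam ∧ ∀ c ∈ Icc (0 : ℝ) 1, ∫ ω, max c (|Z ω| / lam) ∂P = 1 →
      HasDivergenceLE φ β P fun ω => max c (|Z ω| / lam) := by
  obtain ⟨t, ht, hφZ⟩ := hZφ
  set m := ∫ ω, |Z ω| ∂P
  set A := ∫ ω, |(φ (t * |Z ω|)).toReal| ∂P
  set B := |(φ 0).toReal|
  obtain ⟨K, hKβ, hK1, hKm⟩ : ∃ K, (A + t * m * B) / K ≤ β ∧ 1 ≤ K ∧ t * m ≤ K :=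
    (((tendsto_const_nhds.div_atTop tendsto_id).eventually_le_const hβ).and
      ((eventually_ge_atTop 1).and (eventually_ge_atTop (t * m)))).exists
  have : 0 < K := one_pos.trans_le hK1
  refine ⟨K / t, (le_div_iff₀ ht).2 (by linarith), fun c hc hmax => ?_⟩
  have hYi : Integrable (fun ω => |Z ω| / (K / t)) P := hZ.abs.div_const _
  have hc1 : 1 - c ≤ t * m / K := by
    have h := one_sub_le_integral_of_integral_max_eq_one hYi (fun ω => by positivity) hc.1 hmax
    rwa [integral_div, div_div_eq_mul_div, mul_comm] at h
  have hbound : ∀ ω, (φ (max c (|Z ω| / (K / t)))).toReal ≤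
      |(φ (t * |Z ω|)).toReal| / K + (1 - c) * B := fun ω => by
    rw [div_div_eq_mul_div, mul_comm]
    exact hφ.toReal_max_div_le hc hK1
  have hbi : Integrable (fun ω => |(φ (t * |Z ω|)).toReal| / K + (1 - c) * B) P :=
    (hφZ.abs.div_const K).add (integrable_const _)
  refine hasDivergenceLE_of_toReal_le hφ ((integrable_const c).sup hYi).aemeasurable
    (fun ω => hc.1.trans (le_max_left _ _)) hbi hbound ?_
  calc ∫ ω, (|(φ (t * |Z ω|)).toReal| / K + (1 - c) * B) ∂P
      = A / K + (1 - c) * B := by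
        rw [integral_add (hφZ.abs.div_const K) (integrable_const _), integral_div]
        simp [A]
    _ ≤ A / K + t * m / K * B := by gcongr
    _ = (A + t * m * B) / K := by ring
    _ ≤ β := hKβ

end DivergenceBounds

section WeakDuality

variable {P : Measure Ω} {φ : ℝ → EReal} {β : ℝ} {W : Ω → ℝ}

lemma integral_le_rhoDiv (hφ : IsDivergenceFunction φ) (hW : Integrable W P)
    (hW0 : ∀ ω, 0 ≤ W ω) (hW1 : ∫ ω, W ω ∂P = 1) (hdiv : HasDivergenceLE φ β P W)
    {X Y : Ω → ℝ} (hY : Integrable Y P) (hYX : ∀ᵐ ω ∂P, Y ω ≤ X ω * W ω) :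
    ((∫ ω, Y ω ∂P : ℝ) : EReal) ≤ rhoDiv φ β P X := by
  refine le_iInf fun μ => le_iInf fun t => le_iInf fun ht => ?_
  unfold rhoObj
  split_ifs with hψ
  · have hψφ : Integrable (fun ω => psiR φ (X ω / t - μ) + (φ (W ω)).toReal) P := hψ.add hdiv.1
    refine EReal.coe_le_coe_iff.2 ?_
    calc ∫ ω, Y ω ∂P
        ≤ ∫ ω, t * (psiR φ (X ω / t - μ) + (φ (W ω)).toReal + μ * W ω) ∂P :=
          integral_mono_ae hY ((hψφ.add (hW.const_mul μ)).const_mul t)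
            (hYX.mono fun ω hω => hω.trans (hφ.mul_le_mul_psiR_add (hW0 ω) ht μ))
      _ = t * (∫ ω, psiR φ (X ω / t - μ) ∂P + ∫ ω, (φ (W ω)).toReal ∂P + μ) := by
          rw [integral_const_mul, integral_add hψφ (hW.const_mul μ),
            integral_add hψ hdiv.1, integral_const_mul, hW1, mul_one]
      _ ≤ t * (β + μ + ∫ ω, psiR φ (X ω / t - μ) ∂P) := by
          refine mul_le_mul_of_nonneg_left ?_ ht.le
          linarith [hdiv.2]
  · exact le_top

lemma integral_mul_le_of_abs_le_mul (hφ : IsDivergenceFunction φ) (hW : Integrable W P)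
    (hW0 : ∀ ω, 0 ≤ W ω) (hW1 : ∫ ω, W ω ∂P = 1) (hdiv : HasDivergenceLE φ β P W)
    {X Z : Ω → ℝ} {lam : ℝ} (hlam : 0 ≤ lam) (hZ : ∀ᵐ ω ∂P, |Z ω| ≤ lam * W ω)
    (hXZ : Integrable (fun ω => X ω * Z ω) P) (hX : rhoDiv φ β P (fun ω => |X ω|) ≤ 1) :
    ∫ ω, X ω * Z ω ∂P ≤ lam := by
  rcases hlam.eq_or_lt with rfl | hlam
  · refine (integral_eq_zero_of_ae (hZ.mono fun ω hω => ?_)).le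
    rw [zero_mul] at hω
    simp [abs_nonpos_iff.1 hω]
  · have hpt : ∀ᵐ ω ∂P, X ω * Z ω / lam ≤ |X ω| * W ω := hZ.mono fun ω hω => by
      rw [div_le_iff₀' hlam]
      calc X ω * Z ω ≤ |X ω| * |Z ω| := (le_abs_self _).trans (abs_mul _ _).le
        _ ≤ |X ω| * (lam * W ω) := by gcongr
        _ = lam * (|X ω| * W ω) := by ring
    have h := (integral_le_rhoDiv hφ hW hW0 hW1 hdiv (hXZ.div_const lam) hpt).trans hX
    rw [integral_div] at h
    exact (div_le_one hlam).1 (by exact_mod_cast h)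

lemma ae_abs_le_mul_max_div {Z : Ω → ℝ} (hZ : Integrable Z P) {lam : ℝ}
    (hlam : ∫ ω, |Z ω| ∂P ≤ lam) (c : ℝ) : ∀ᵐ ω ∂P, |Z ω| ≤ lam * max c (|Z ω| / lam) := by
  have hZ0 : 0 ≤ ∫ ω, |Z ω| ∂P := integral_nonneg fun ω => abs_nonneg _
  rcases (hZ0.trans hlam).eq_or_lt with rfl | hpos
  · filter_upwards [(integral_eq_zero_iff_of_nonneg (fun ω => abs_nonneg _) hZ.abs).1
      (hlam.antisymm hZ0)] with ω hω
    simpa using hω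
  · exact .of_forall fun ω => (div_le_iff₀' hpos).1 (le_max_right _ _)

lemma pos_of_integral_max_div_eq_one {Z : Ω → ℝ} {lam c : ℝ} (hlam : ∫ ω, |Z ω| ∂P < lam)
    (h : ∫ ω, max c (|Z ω| / lam) ∂P = 1) : 0 < c := by
  by_contra! hc
  have hlam0 : 0 < lam := (integral_nonneg fun ω => abs_nonneg _).trans_lt hlam
  have hmax (ω : Ω) : max c (|Z ω| / lam) = |Z ω| / lam := max_eq_right (hc.trans (by positivity))
  simp only [hmax, integral_div] at h
  exact hlam.ne ((div_eq_one_iff_eq hlam0.ne').1 h)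

end WeakDuality

lemma rhoDiv_div_le_one {P : Measure Ω} {φ : ℝ → EReal} {β γ : ℝ} {U : Ω → ℝ}
    (hψ : Integrable (fun ω => psiR φ (U ω + γ)) P)
    (hpos : 0 < β - γ + ∫ ω, psiR φ (U ω + γ) ∂P) :
    rhoDiv φ β P (fun ω => U ω / (β - γ + ∫ ω, psiR φ (U ω + γ) ∂P)) ≤ 1 := by
  set D := β - γ + ∫ ω, psiR φ (U ω + γ) ∂P with hD
  have harg (ω : Ω) : U ω / D / (1 / D) - -γ = U ω + γ := by field_simp; ring
  refine iInf₂_le_of_le (-γ) (1 / D) (iInf_le_of_le (one_div_pos.2 hpos) ?_)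
  rw [rhoObj, if_pos (by simpa only [harg] using hψ)]
  simp only [harg, ← sub_eq_add_neg, ← hD, one_div_mul_cancel hpos.ne', EReal.coe_one, le_refl]

section StrongDuality

open Filter Set Topology

variable {P : Measure Ω} [IsProbabilityMeasure P] {φ : ℝ → EReal} {β : ℝ} {Z : Ω → ℝ}

lemma le_sSup_dualNormSet_of_mul_le (hφ : IsDivergenceFunction φ) (hβ : 0 < β)
    (hZ : Integrable Z P) {U : Ω → ℝ} {b γ lam : ℝ} (hUm : AEMeasurable U P)
    (hU : ∀ ω, U ω ∈ Icc 0 b)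
    (h : lam * (β - γ + ∫ ω, psiR φ (U ω + γ) ∂P) ≤ ∫ ω, U ω * |Z ω| ∂P) :
    (lam : EReal) ≤ sSup (dualNormSet φ β P Z) := by
  have hψ {f : Ω → ℝ} {x y : ℝ} (hf : AEMeasurable f P) (hfxy : ∀ ω, f ω ∈ Icc x y) :
      Integrable (fun ω => psiR φ (f ω)) P :=
    integrable_comp_of_monotoneOn_Icc (hφ.monotone_psiR.monotoneOn _) hf hfxy
  have hψU : Integrable (fun ω => psiR φ (U ω + γ)) P :=
    hψ (x := γ) (y := b + γ) (hUm.add_const γ) fun ω =>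
      ⟨by linarith [(hU ω).1], by linarith [(hU ω).2]⟩
  set D := β - γ + ∫ ω, psiR φ (U ω + γ) ∂P
  have hD0 : 0 < D := by
    have hγ : ∫ _, γ ∂P ≤ ∫ ω, psiR φ (U ω + γ) ∂P :=
      integral_mono (integrable_const γ) hψU fun ω =>
        (le_add_of_nonneg_left (hU ω).1).trans (hφ.le_psiR _)
    rw [integral_const, probReal_univ, one_smul] at hγ
    linarith
  choose s hs hsZ using fun ω => RCLike.exists_norm_eq_mul_self (Z ω)
  simp only [Real.norm_eq_abs, RCLike.ofReal_real_eq_id, id_eq] at hs hsZ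
  have habs (ω : Ω) : |s ω * (U ω / D)| = U ω / D := by
    rw [abs_mul, hs, one_mul, abs_of_nonneg (div_nonneg (hU ω).1 hD0.le)]
  have hXZ (ω : Ω) : s ω * (U ω / D) * Z ω = U ω * |Z ω| / D := by rw [hsZ]; ring
  have hle : lam ≤ ∫ ω, s ω * (U ω / D) * Z ω ∂P := by
    simpa only [hXZ, integral_div, le_div_iff₀ hD0] using h
  refine (EReal.coe_le_coe_iff.2 hle).trans
    (le_sSup ⟨fun ω => s ω * (U ω / D), ⟨1, one_pos, ?_⟩, ?_, ?_, rfl⟩)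
  · simp only [habs, one_mul]
    refine hψ (x := 0) (y := b / D) (hUm.div_const D) fun ω => ?_
    exact ⟨div_nonneg (hU ω).1 hD0.le, div_le_div_of_nonneg_right (hU ω).2 hD0.le⟩
  · simpa only [habs] using rhoDiv_div_le_one hψU hD0
  · simp only [hXZ]
    refine (hZ.abs.bdd_mul (c := b) hUm.aestronglyMeasurable (.of_forall fun ω => ?_)).div_const D
    rw [Real.norm_of_nonneg (hU ω).1]
    exact (hU ω).2

lemma integral_abs_le_sSup_dualNormSet (hφ : IsDivergenceFunction φ) (hβ : 0 < β)
    (hZ : Integrable Z P) : ((∫ ω, |Z ω| ∂P : ℝ) : EReal) ≤ sSup (dualNormSet φ β P Z) := by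
  refine EReal.ge_of_forall_gt_iff_ge.1 fun lam hlam => ?_
  have hgap : 0 < ∫ ω, |Z ω| ∂P - lam := sub_pos.2 (by exact_mod_cast hlam)
  set k := |lam * (β + psiR φ 0)| / (∫ ω, |Z ω| ∂P - lam)
  refine le_sSup_dualNormSet_of_mul_le (U := fun _ => k) (γ := -k) hφ hβ hZ aemeasurable_const
    (fun _ => right_mem_Icc.2 (by positivity)) ?_
  have hkgap : k * (∫ ω, |Z ω| ∂P - lam) = |lam * (β + psiR φ 0)| := div_mul_cancel₀ _ hgap.ne'
  simp only [add_neg_cancel, integral_const, probReal_univ, one_smul, integral_const_mul]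
  linarith [le_abs_self (lam * (β + psiR φ 0))]

lemma le_sSup_dualNormSet_of_lt_integral_min (hφ : IsDivergenceFunction φ) (hβ : 0 < β)
    (hZ : Integrable Z P) {W : Ω → ℝ} {lam c N : ℝ} (hlam : 0 ≤ lam) (hc : 0 < c) (hcN : c ≤ N)
    (hW : Integrable W P) (hcW : ∀ ω, c ≤ W ω) (hW1 : ∫ ω, W ω ∂P = 1)
    (hWZ : ∀ ω, W ω = c ∨ |Z ω| = lam * W ω) (hN : 0 ≤ rightDerivative φ N)
    (hβN : β < ∫ ω, (φ (min (W ω) N)).toReal ∂P) :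
    (lam : EReal) ≤ sSup (dualNormSet φ β P Z) := by
  set γ := rightDerivative φ c
  set G : Ω → ℝ := fun ω => rightDerivative φ (min (W ω) N)
  have hmin (ω : Ω) : min (W ω) N ∈ Icc c N := ⟨le_min (hcW ω) hcN, min_le_right _ _⟩
  have hmono : MonotoneOn (rightDerivative φ) (Icc c N) :=
    hφ.monotoneOn_rightDerivative.mono fun x hx => hc.trans_le hx.1
  have hG : Integrable G P :=
    integrable_comp_of_monotoneOn_Icc hmono (hW.aemeasurable.min aemeasurable_const) hmin
  have hGmem (ω : Ω) : G ω ∈ Icc γ (rightDerivative φ N) :=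
    ⟨hmono (left_mem_Icc.2 hcN) (hmin ω) (hmin ω).1,
      hmono (hmin ω) (right_mem_Icc.2 hcN) (hmin ω).2⟩
  have hU (ω : Ω) : G ω - γ ∈ Icc 0 (rightDerivative φ N - γ) :=
    ⟨sub_nonneg.2 (hGmem ω).1, sub_le_sub_right (hGmem ω).2 γ⟩
  have hψG : Integrable (fun ω => psiR φ (G ω)) P :=
    integrable_comp_of_monotoneOn_Icc (hφ.monotone_psiR.monotoneOn _) hG.aemeasurable hGmem
  have hGW : Integrable (fun ω => G ω * W ω) P :=
    hW.bdd_mul (c := max |γ| |rightDerivative φ N|) hG.aestronglyMeasurable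
      (.of_forall fun ω => abs_le_max_abs_abs (hGmem ω).1 (hGmem ω).2)
  have hφW : Integrable (fun ω => (φ (min (W ω) N)).toReal) P :=
    integrable_toReal_min hφ hW.aemeasurable (fun ω => hc.le.trans (hcW ω)) (hc.le.trans hcN)
  have hfenchel : ∫ ω, psiR φ (G ω) ∂P ≤
      ∫ ω, G ω * W ω ∂P - ∫ ω, (φ (min (W ω) N)).toReal ∂P := by
    rw [← integral_sub hGW hφW]
    exact integral_mono hψG (hGW.sub hφW) fun ω =>
      hφ.psiR_rightDerivative_min_le (hc.trans_le (hcW ω)) (hc.trans_le hcN) hN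
  have hUZ (ω : Ω) : (G ω - γ) * |Z ω| = lam * (G ω * W ω - γ * W ω) := by
    rcases hWZ ω with hω | hω
    · simp [G, γ, hω, min_eq_left hcN]
    · rw [hω]; ring
  refine le_sSup_dualNormSet_of_mul_le (γ := γ) hφ hβ hZ (hG.aemeasurable.sub_const γ) hU ?_
  simp only [sub_add_cancel, hUZ]
  rw [integral_const_mul, integral_sub hGW (hW.const_mul γ), integral_const_mul, hW1]
  gcongr
  linarith

lemma le_sSup_dualNormSet_of_not_hasDivergenceLE (hφ : IsDivergenceFunction φ) (hβ : 0 < β)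
    (hZ : Integrable Z P) {lam c : ℝ} (hlam : ∫ ω, |Z ω| ∂P < lam)
    (hmax : ∫ ω, max c (|Z ω| / lam) ∂P = 1)
    (hdiv : ¬ HasDivergenceLE φ β P fun ω => max c (|Z ω| / lam)) :
    (lam : EReal) ≤ sSup (dualNormSet φ β P Z) := by
  have hlam0 : 0 < lam := (integral_nonneg fun ω => abs_nonneg _).trans_lt hlam
  have hc : 0 < c := pos_of_integral_max_div_eq_one hlam hmax
  have hW : Integrable (fun ω => max c (|Z ω| / lam)) P :=
    (integrable_const c).sup (hZ.abs.div_const lam)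
  have hcW (ω : Ω) : c ≤ max c (|Z ω| / lam) := le_max_left _ _
  have htrunc : ∀ᶠ n : ℕ in atTop, β < ∫ ω, (φ (min (max c (|Z ω| / lam)) n)).toReal ∂P := by
    have h := mt (hasDivergenceLE_of_frequently_min hφ hW.aemeasurable
      fun ω => hc.le.trans (hcW ω)) hdiv
    simpa only [not_frequently, not_le] using h
  obtain ⟨n, hβn, hcn, hn⟩ := (htrunc.and (tendsto_natCast_atTop_atTop.eventually
    ((eventually_ge_atTop c).and hφ.eventually_rightDerivative_nonneg))).exists
  refine le_sSup_dualNormSet_of_lt_integral_min hφ hβ hZ hlam0.le hc hcn hW hcW hmax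
    (fun ω => ?_) hn hβn
  rcases max_choice c (|Z ω| / lam) with h | h
  · exact .inl h
  · exact .inr (by rw [h, mul_div_cancel₀ _ hlam0.ne'])

end StrongDuality

theorem sSup_dualNormSet_eq_sInf {P : Measure Ω} [IsProbabilityMeasure P] {φ : ℝ → EReal}
    (hφ : IsDivergenceFunction φ) {β : ℝ} (hβ : 0 < β) {Z : Ω → ℝ} (hZ : Integrable Z P)
    (hZφ : ∃ t : ℝ, 0 < t ∧ Integrable (fun ω => (φ (t * |Z ω|)).toReal) P) {c : ℝ → ℝ}
    (hc_mem : ∀ lam : ℝ, ∫ ω, |Z ω| ∂P ≤ lam → c lam ∈ Set.Icc (0 : ℝ) 1)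
    (hc_eq : ∀ lam : ℝ, ∫ ω, |Z ω| ∂P ≤ lam → ∫ ω, max (c lam) (|Z ω| / lam) ∂P = 1) :
    sSup (dualNormSet φ β P Z) = ((sInf {lam : ℝ | ∫ ω, |Z ω| ∂P ≤ lam ∧
      HasDivergenceLE φ β P fun ω => max (c lam) (|Z ω| / lam)} : ℝ) : EReal) := by
  have hZ0 : 0 ≤ ∫ ω, |Z ω| ∂P := integral_nonneg fun ω => abs_nonneg _
  apply le_antisymm
  · obtain ⟨lam₀, hlam₀, hdiv₀⟩ := exists_forall_hasDivergenceLE hφ hβ hZ hZφ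
    refine sSup_le ?_
    rintro _ ⟨X, -, hX, hXZ, rfl⟩
    refine EReal.coe_le_coe_iff.2 (le_csInf ⟨lam₀, hlam₀, hdiv₀ _ (hc_mem _ hlam₀)
      (hc_eq _ hlam₀)⟩ fun lam ⟨hlam, hdiv⟩ => ?_)
    exact integral_mul_le_of_abs_le_mul hφ ((integrable_const _).sup (hZ.abs.div_const lam))
      (fun ω => (hc_mem lam hlam).1.trans (le_max_left _ _)) (hc_eq lam hlam) hdiv
      (hZ0.trans hlam) (ae_abs_le_mul_max_div hZ hlam (c lam)) hXZ hX
  · refine EReal.ge_of_forall_gt_iff_ge.1 fun lam hlam => ?_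
    have hlam : lam < _ := EReal.coe_lt_coe_iff.1 hlam
    rcases le_or_gt lam (∫ ω, |Z ω| ∂P) with hle | hgt
    · exact (EReal.coe_le_coe_iff.2 hle).trans (integral_abs_le_sSup_dualNormSet hφ hβ hZ)
    · exact le_sSup_dualNormSet_of_not_hasDivergenceLE hφ hβ hZ hgt (hc_eq lam hgt.le) fun hdiv =>
        notMem_of_lt_csInf hlam ⟨_, fun _ h => h.1⟩ ⟨hgt.le, hdiv⟩

theorem dual_norm_formula_general (P : Measure Ω) [IsProbabilityMeasure P]
    (φ : ℝ → EReal) (hφ : IsDivergenceFunction φ) (β : ℝ) (hβ : 0 < β)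
    (Z : Ω → ℝ) (hZ : Integrable Z P)
    (hZφ : ∃ t : ℝ, 0 < t ∧ Integrable (fun ω => (φ (t * |Z ω|)).toReal) P)
    (c : ℝ → ℝ)
    (hc_mem : ∀ lam : ℝ, (∫ ω, |Z ω| ∂P) ≤ lam → c lam ∈ Set.Icc (0 : ℝ) 1)
    (hc_eq : ∀ lam : ℝ, (∫ ω, |Z ω| ∂P) ≤ lam →
      (∫ ω, max (c lam) (|Z ω| / lam) ∂P) = 1) :
    sSup (dualNormSet φ β P Z) =
      ((sInf {lam : ℝ | (∫ ω, |Z ω| ∂P) ≤ lam ∧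
        Integrable (fun ω => (φ (max (c lam) (|Z ω| / lam))).toReal) P ∧
        (∫ ω, (φ (max (c lam) (|Z ω| / lam))).toReal ∂P) ≤ β} : ℝ) : EReal) ∧
    sSup (dualNormSet φ β P Z) =
      ((sInf {lam : ℝ | (∫ ω, |Z ω| ∂P) ≤ lam ∧ ∃ cc : ℝ, cc ∈ Set.Icc (0 : ℝ) 1 ∧
        (∫ ω, max cc (|Z ω| / lam) ∂P) = 1 ∧
        Integrable (fun ω => (φ (max cc (|Z ω| / lam))).toReal) P ∧
        (∫ ω, (φ (max cc (|Z ω| / lam))).toReal ∂P) ≤ β} : ℝ) : EReal) := by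
  have hsets : {lam : ℝ | (∫ ω, |Z ω| ∂P) ≤ lam ∧ ∃ cc : ℝ, cc ∈ Set.Icc (0 : ℝ) 1 ∧
      (∫ ω, max cc (|Z ω| / lam) ∂P) = 1 ∧ HasDivergenceLE φ β P fun ω => max cc (|Z ω| / lam)} =
      {lam : ℝ | (∫ ω, |Z ω| ∂P) ≤ lam ∧
        HasDivergenceLE φ β P fun ω => max (c lam) (|Z ω| / lam)} := by
    refine Set.ext fun lam => and_congr_right fun hlam => ⟨?_, fun hdiv =>
      ⟨c lam, hc_mem lam hlam, hc_eq lam hlam, hdiv⟩⟩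
    rintro ⟨cc, -, hcc, hdiv⟩
    exact hdiv.congr
      (max_ae_eq_max_of_integral_eq (hZ.abs.div_const lam) (hcc.trans (hc_eq lam hlam).symm))
  have hdual := sSup_dualNormSet_eq_sInf hφ hβ hZ hZφ hc_mem hc_eq
  exact ⟨hdual, hdual.trans (congrArg (fun s : Set ℝ => ((sInf s : ℝ) : EReal)) hsets.symm)⟩

/-- Dual norm formula: for `φ ∈ Δ₂` and `Z ∈ L^φ`,
`‖Z‖*_{φ,β} = inf { λ ≥ E|Z| : E[φ(max{c_Z(λ), |Z|/λ})] ≤ β }`, where `c_Z` is the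
continuous function with `E[max{c_Z(λ), |Z|/λ}] = 1`; equivalently the infimum over
`λ ≥ E|Z|` admitting `c ∈ [0,1]` with `E[max{c, |Z|/λ}] = 1` and `E[φ(max{c, |Z|/λ})] ≤ β`. -/
theorem dual_norm_formula (P : Measure Ω) [IsProbabilityMeasure P]
    (φ : ℝ → EReal) (hφ : IsDivergenceFunction φ) (hΔ : DeltaTwo φ) (β : ℝ) (hβ : 0 < β)
    (Z : Ω → ℝ) (hZ : Integrable Z P)
    (hZφ : ∃ t : ℝ, 0 < t ∧ Integrable (fun ω => (φ (t * |Z ω|)).toReal) P)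
    (c : ℝ → ℝ)
    (hc_cont : ContinuousOn c (Set.Ici (∫ ω, |Z ω| ∂P)))
    (hc_mem : ∀ lam : ℝ, (∫ ω, |Z ω| ∂P) ≤ lam → c lam ∈ Set.Icc (0 : ℝ) 1)
    (hc_eq : ∀ lam : ℝ, (∫ ω, |Z ω| ∂P) ≤ lam →
      (∫ ω, max (c lam) (|Z ω| / lam) ∂P) = 1) :
    sSup (dualNormSet φ β P Z) =
      ((sInf {lam : ℝ | (∫ ω, |Z ω| ∂P) ≤ lam ∧
        Integrable (fun ω => (φ (max (c lam) (|Z ω| / lam))).toReal) P ∧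
        (∫ ω, (φ (max (c lam) (|Z ω| / lam))).toReal ∂P) ≤ β} : ℝ) : EReal) ∧
    sSup (dualNormSet φ β P Z) =
      ((sInf {lam : ℝ | (∫ ω, |Z ω| ∂P) ≤ lam ∧ ∃ cc : ℝ, cc ∈ Set.Icc (0 : ℝ) 1 ∧
        (∫ ω, max cc (|Z ω| / lam) ∂P) = 1 ∧
        Integrable (fun ω => (φ (max cc (|Z ω| / lam))).toReal) P ∧
        (∫ ω, (φ (max cc (|Z ω| / lam))).toReal ∂P) ≤ β} : ℝ) : EReal) :=
  dual_norm_formula_general P φ hφ β hβ Z hZ hZφ c hc_mem hc_eq
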